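/- arXiv:2007.02740 — 3 statements merged into one kernel-verified Lean document; each statement's English description precedes it below -/
import Mathlib

section
/- Let K, m ≥ 1, and let A ∈ F₂^{K×K} be a matrix satisfying A² = I_K. Let B ∈ F₂^{2K×2K} be the block matrix with blocks [[I_K, A],[A, I_K]], and let B^{⊗m} denote the m-fold Kronecker product of B with itself. Then the matrix B^{⊗m} + I_{(2K)^m} over F₂ has full rank (2K)^m, i.e., it is invertible. -/
open Classical

noncomputable section

/-! ### Deterministic communication protocols -/

/-- A deterministic communication protocol: a finite binary protocol tree whose
leaves are labeled by outputs in `O`.  At a `nodeA` vertex Alice sends a bit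
(computed from her input), at a `nodeB` vertex Bob sends a bit. -/
inductive Protocol (X Y O : Type) : Type where
  | leaf : O → Protocol X Y O
  | nodeA : (X → Bool) → Protocol X Y O → Protocol X Y O → Protocol X Y O
  | nodeB : (Y → Bool) → Protocol X Y O → Protocol X Y O → Protocol X Y O

namespace Protocol

variable {X Y O : Type}

/-- The output of the protocol on an input pair. -/
def run : Protocol X Y O → X → Y → O
  | leaf o, _, _ => o
  | nodeA h p0 p1, x, y => if h x then run p1 x y else run p0 x y
  | nodeB h p0 p1, x, y => if h y then run p1 x y else run p0 x y

/-- Depth (communication complexity) of a protocol tree. -/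
def depth : Protocol X Y O → ℕ
  | leaf _ => 0
  | nodeA _ p0 p1 => max (depth p0) (depth p1) + 1
  | nodeB _ p0 p1 => max (depth p0) (depth p1) + 1

/-- Number of leaves (protocol size). -/
def leaves : Protocol X Y O → ℕ
  | leaf _ => 1
  | nodeA _ p0 p1 => leaves p0 + leaves p1
  | nodeB _ p0 p1 => leaves p0 + leaves p1

/-- `followsA p π x` : Alice's input `x` is consistent with the partial transcript `π`,
i.e. `x` belongs to the Alice-side `𝒳_π` of the rectangle associated with the vertex `π`. -/
def followsA : Protocol X Y O → List Bool → X → Prop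
  | _, [], _ => True
  | leaf _, _ :: _, _ => False
  | nodeA h p0 p1, b :: rest, x =>
      h x = b ∧ (if b then followsA p1 rest x else followsA p0 rest x)
  | nodeB _ p0 p1, b :: rest, x =>
      if b then followsA p1 rest x else followsA p0 rest x

/-- `followsB p π y` : Bob's input `y` is consistent with the partial transcript `π`,
i.e. `y` belongs to the Bob-side `𝒴_π` of the rectangle associated with the vertex `π`. -/
def followsB : Protocol X Y O → List Bool → Y → Prop
  | _, [], _ => True
  | leaf _, _ :: _, _ => False
  | nodeA _ p0 p1, b :: rest, y =>
      if b then followsB p1 rest y else followsB p0 rest y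
  | nodeB h p0 p1, b :: rest, y =>
      h y = b ∧ (if b then followsB p1 rest y else followsB p0 rest y)

/-- The subtree of the protocol reached by following a partial transcript. -/
def subtree : Protocol X Y O → List Bool → Option (Protocol X Y O)
  | p, [] => some p
  | leaf _, _ :: _ => none
  | nodeA _ p0 p1, b :: rest => if b then subtree p1 rest else subtree p0 rest
  | nodeB _ p0 p1, b :: rest => if b then subtree p1 rest else subtree p0 rest

/-- `π` is a (partial or full) transcript of the protocol, i.e. a vertex of the protocol tree. -/
def IsTranscript (p : Protocol X Y O) (π : List Bool) : Prop :=
  (subtree p π).isSome = true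

/-- `π` is a full transcript of the protocol, i.e. a root-to-leaf path. -/
def IsFullTranscript (p : Protocol X Y O) (π : List Bool) : Prop :=
  ∃ o : O, subtree p π = some (leaf o)

end Protocol

/-- A protocol solves a communication problem `S` if on every input pair it
outputs a valid output. -/
def Solves {X Y O : Type} (p : Protocol X Y O) (S : X → Y → O → Prop) : Prop :=
  ∀ x y, S x y (p.run x y)

/-- `L(S)`: minimal number of leaves of a protocol solving `S`. -/
def Lsize {X Y O : Type} (S : X → Y → O → Prop) : ℕ :=
  sInf {k | ∃ p : Protocol X Y O, Solves p S ∧ p.leaves = k}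

/-- `CC(S)`: the deterministic communication complexity (minimal depth) of `S`. -/
def CC {X Y O : Type} (S : X → Y → O → Prop) : ℕ :=
  sInf {k | ∃ p : Protocol X Y O, Solves p S ∧ p.depth = k}

/-! ### Decision trees and query complexity -/

inductive DTree (ι O : Type) : Type where
  | leaf : O → DTree ι O
  | node : ι → DTree ι O → DTree ι O → DTree ι O

namespace DTree

variable {ι O : Type}

def run : DTree ι O → (ι → Bool) → O
  | leaf o, _ => o
  | node i t0 t1, z => if z i then run t1 z else run t0 z

def depth : DTree ι O → ℕ
  | leaf _ => 0
  | node _ t0 t1 => max (depth t0) (depth t1) + 1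

end DTree

def DSolves {ι O : Type} (T : DTree ι O) (S : (ι → Bool) → O → Prop) : Prop :=
  ∀ z, S z (T.run z)

/-- `Q(S)`: the deterministic query complexity of the search problem `S`. -/
def Qcomplexity {ι O : Type} (S : (ι → Bool) → O → Prop) : ℕ :=
  sInf {k | ∃ T : DTree ι O, DSolves T S ∧ T.depth = k}

/-! ### Monotone Karchmer–Wigderson relations -/

/-- The monotone KW relation of a rectangle `A × B`: find `i` with `x i > y i`. -/
def mKWrect {ι : Type} (A B : Set (ι → Bool)) : ↥A → ↥B → ι → Prop :=
  fun x y i => x.val i = true ∧ y.val i = false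

/-- `mL(A × B)`: the monotone formula complexity of the rectangle `A × B`. -/
def mL {ι : Type} (A B : Set (ι → Bool)) : ℕ := Lsize (mKWrect A B)

/-- The monotone KW relation of a monotone function `f`. -/
def mKW {ι : Type} (f : (ι → Bool) → Bool) :
    {x : ι → Bool // f x = true} → {y : ι → Bool // f y = false} → ι → Prop :=
  fun x y i => x.val i = true ∧ y.val i = false

/-! ### Lifted search problems, discrepancy, reductions -/

/-- The lifted search problem `S ◇ gd`. -/
def liftSP {ι Λ O : Type} (S : (ι → Bool) → O → Prop) (gd : Λ → Λ → Bool) :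
    (ι → Λ) → (ι → Λ) → O → Prop :=
  fun x y o => S (fun i => gd (x i) (y i)) o

/-- The discrepancy of a gadget `gd : {0,1}^t × {0,1}^t → {0,1}`. -/
def disc {t : ℕ} (gd : (Fin t → Bool) → (Fin t → Bool) → Bool) : ℝ :=
  sSup {r : ℝ | ∃ A B : Finset (Fin t → Bool),
    r = |((((A ×ˢ B).filter fun uv => gd uv.1 uv.2 = false).card : ℝ) -
          (((A ×ˢ B).filter fun uv => gd uv.1 uv.2 = true).card : ℝ))| /
        ((2 ^ t : ℝ) * (2 ^ t : ℝ))}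

/-- A (rectangular) reduction between communication problems. -/
def Reduces {X Y O X' Y' O' : Type}
    (S : X → Y → O → Prop) (S' : X' → Y' → O' → Prop) : Prop :=
  ∃ (RA : X → X') (RB : Y → Y') (Rout : O' → O),
    ∀ x y o', S' (RA x) (RB y) o' → S x y (Rout o')

/-- An injective reduction between communication problems. -/
def ReducesInj {X Y O X' Y' O' : Type}
    (S : X → Y → O → Prop) (S' : X' → Y' → O' → Prop) : Prop :=
  ∃ (RA : X → X') (RB : Y → Y') (Rout : O' → O),
    Function.Injective RA ∧ Function.Injective RB ∧
    ∀ x y o', S' (RA x) (RB y) o' → S x y (Rout o')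

/-! ### Compositions -/

/-- `mKW_f ◇ mKW_g := mKW_{f ◇ g}` : Alice gets `X ∈ (f◇g)⁻¹(1)`, Bob gets
`Y ∈ (f◇g)⁻¹(0)`, and they must find an entry `(i,j)` with `X i j > Y i j`. -/
def diamondKW {m : ℕ} {ι : Type} (f : (Fin m → Bool) → Bool) (g : (ι → Bool) → Bool) :
    {X : Fin m → ι → Bool // f (fun i => g (X i)) = true} →
    {Y : Fin m → ι → Bool // f (fun i => g (Y i)) = false} →
    (Fin m × ι) → Prop :=
  fun X Y e => X.val e.1 e.2 = true ∧ Y.val e.1 e.2 = false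

/-- `mKW_f ⊛ mKW_g` : same inputs as `mKW_f ◇ mKW_g`, but valid outputs are entries
`(i,j)` with `a_i > b_i` and `X i j > Y i j`, where `a_i = g(X_i)`, `b_i = g(Y_i)`. -/
def starKW {m : ℕ} {ι : Type} (f : (Fin m → Bool) → Bool) (g : (ι → Bool) → Bool) :
    {X : Fin m → ι → Bool // f (fun i => g (X i)) = true} →
    {Y : Fin m → ι → Bool // f (fun i => g (Y i)) = false} →
    (Fin m × ι) → Prop :=
  fun X Y e => g (X.val e.1) = true ∧ g (Y.val e.1) = false ∧
    X.val e.1 e.2 = true ∧ Y.val e.1 e.2 = false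

/-- `mKW_f ⊛ (S ◇ gd)` : Alice gets `X ∈ Λ^{m×ℓ}` and `a ∈ f⁻¹(1)`, Bob gets
`Y ∈ Λ^{m×ℓ}` and `b ∈ f⁻¹(0)`; valid outputs are pairs `(i,o)` with `a_i > b_i`
and `o` a valid output of `S ◇ gd` on the rows `(X_i, Y_i)`. -/
def starLift {m ℓ : ℕ} {Λ O : Type} (f : (Fin m → Bool) → Bool)
    (S : (Fin ℓ → Bool) → O → Prop) (gd : Λ → Λ → Bool) :
    ((Fin m → Fin ℓ → Λ) × {a : Fin m → Bool // f a = true}) →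
    ((Fin m → Fin ℓ → Λ) × {b : Fin m → Bool // f b = false}) →
    (Fin m × O) → Prop :=
  fun Xa Yb io =>
    Xa.2.val io.1 = true ∧ Yb.2.val io.1 = false ∧
      liftSP S gd (Xa.1 io.1) (Yb.1 io.1) io.2

/-! ### Live transcripts -/

/-- `𝒜_{π,W}` : the vectors `a ∈ f⁻¹(1)` such that `(W,a)` is consistent with `π`. -/
def Aset {m ℓ : ℕ} {Λ O : Type} (f : (Fin m → Bool) → Bool)
    (Pr : Protocol ((Fin m → Fin ℓ → Λ) × {a : Fin m → Bool // f a = true})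
                   ((Fin m → Fin ℓ → Λ) × {b : Fin m → Bool // f b = false}) (Fin m × O))
    (π : List Bool) (W : Fin m → Fin ℓ → Λ) : Set (Fin m → Bool) :=
  {a | ∃ h : f a = true, Protocol.followsA Pr π (W, ⟨a, h⟩)}

/-- `ℬ_{π,W}` : the vectors `b ∈ f⁻¹(0)` such that `(W,b)` is consistent with `π`. -/
def Bset {m ℓ : ℕ} {Λ O : Type} (f : (Fin m → Bool) → Bool)
    (Pr : Protocol ((Fin m → Fin ℓ → Λ) × {a : Fin m → Bool // f a = true})
                   ((Fin m → Fin ℓ → Λ) × {b : Fin m → Bool // f b = false}) (Fin m × O))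
    (π : List Bool) (W : Fin m → Fin ℓ → Λ) : Set (Fin m → Bool) :=
  {b | ∃ h : f b = false, Protocol.followsB Pr π (W, ⟨b, h⟩)}

/-- `γ(π)` : the average over uniform `W ∈ Λ^{m×ℓ}` of `mL(𝒜_{π,W} × ℬ_{π,W})`. -/
def gammaM {m ℓ : ℕ} {Λ O : Type} [Fintype Λ] [DecidableEq Λ] (f : (Fin m → Bool) → Bool)
    (Pr : Protocol ((Fin m → Fin ℓ → Λ) × {a : Fin m → Bool // f a = true})
                   ((Fin m → Fin ℓ → Λ) × {b : Fin m → Bool // f b = false}) (Fin m × O))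
    (π : List Bool) : ℝ :=
  (∑ W : Fin m → Fin ℓ → Λ, (mL (Aset f Pr π W) (Bset f Pr π W) : ℝ)) /
    (Fintype.card (Fin m → Fin ℓ → Λ) : ℝ)

/-- A transcript is live (alive) if it is a vertex of the protocol tree and `γ(π) ≥ 4m²`. -/
def LiveT {m ℓ : ℕ} {Λ O : Type} [Fintype Λ] [DecidableEq Λ] (f : (Fin m → Bool) → Bool)
    (Pr : Protocol ((Fin m → Fin ℓ → Λ) × {a : Fin m → Bool // f a = true})
                   ((Fin m → Fin ℓ → Λ) × {b : Fin m → Bool // f b = false}) (Fin m × O))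
    (π : List Bool) : Prop :=
  Protocol.IsTranscript Pr π ∧ 4 * (m : ℝ) ^ 2 ≤ gammaM f Pr π

/-! ### Average degree -/

/-- Projection of a set of strings to the coordinates in `J`. -/
def projSet {N Λ : Type} (W : Set (N → Λ)) (J : Set N) : Set (↥J → Λ) :=
  (fun w (j : ↥J) => w j.val) '' W

/-- Relative average degree: `rAvgDeg_I(W) = (|W| / |W|_{N−I}|) / |Λ|^{|I|}`. -/
def rAvgDeg {N Λ : Type} [Fintype Λ] (W : Set (N → Λ)) (I : Set N) : ℝ :=
  ((W.ncard : ℝ) / ((projSet W Iᶜ).ncard : ℝ)) / ((Fintype.card Λ : ℝ) ^ I.ncard)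

/-- View a set of `m × ℓ` matrices as a set of strings indexed by `Fin m × Fin ℓ`. -/
def matSet {m ℓ : ℕ} {Λ : Type} (WW : Set (Fin m → Fin ℓ → Λ)) : Set (Fin m × Fin ℓ → Λ) :=
  (fun W p => W p.1 p.2) '' WW

/-! ### Hard collections -/

/-- A transcript `π` supports the collection `(𝒲, a^W, b^W)` if for every `W ∈ 𝒲`,
`(W, a^W) ∈ 𝒳_π` and `(W, b^W) ∈ 𝒴_π`. -/
def SupportsCollection {m ℓ : ℕ} {Λ O : Type} (f : (Fin m → Bool) → Bool)
    (Pr : Protocol ((Fin m → Fin ℓ → Λ) × {a : Fin m → Bool // f a = true})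
                   ((Fin m → Fin ℓ → Λ) × {b : Fin m → Bool // f b = false}) (Fin m × O))
    (π : List Bool) (WW : Set (Fin m → Fin ℓ → Λ))
    (aW bW : (Fin m → Fin ℓ → Λ) → (Fin m → Bool)) : Prop :=
  ∀ W ∈ WW, aW W ∈ Aset f Pr π W ∧ bW W ∈ Bset f Pr π W

/-- The collection `(𝒲, a^W, b^W)` is hard: there is a set `R` of revealed rows such that
(i) every set `I` of unrevealed rows has relative average degree at least `4^{-|I|}` in the
restriction of `𝒲` to the unrevealed rows, and (ii) `a^W|_R ≤ b^{W'}|_R` for all `W, W' ∈ 𝒲`. -/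
def HardCollection {m ℓ : ℕ} {Λ : Type} [Fintype Λ] (f : (Fin m → Bool) → Bool)
    (WW : Set (Fin m → Fin ℓ → Λ))
    (aW bW : (Fin m → Fin ℓ → Λ) → (Fin m → Bool)) : Prop :=
  ∃ R : Set (Fin m),
    (∀ I : Set (Fin m), I ⊆ Rᶜ →
      ((1 : ℝ) / 4) ^ I.ncard ≤
        rAvgDeg (projSet (matSet WW) {p : Fin m × Fin ℓ | p.1 ∉ R})
          {q : ↥{p : Fin m × Fin ℓ | p.1 ∉ R} | q.val.1 ∈ I}) ∧
    (∀ W ∈ WW, ∀ W' ∈ WW, ∀ i ∈ R, aW W i ≤ bW W' i)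

/-! ### CNF formulas, Nullstellensatz degree -/

/-- A clause over `ℓ` variables: a set of literals; `(i, true)` is the positive
literal `x_i`, `(i, false)` is the negative literal `¬x_i`. -/
abbrev CnfClause (ℓ : ℕ) := Finset (Fin ℓ × Bool)

/-- An assignment satisfies a clause if some literal is satisfied. -/
def clauseSat {ℓ : ℕ} (z : Fin ℓ → Bool) (C : CnfClause ℓ) : Prop :=
  ∃ lit ∈ C, z lit.1 = lit.2

/-- The search problem `S_φ` : given an assignment, find a violated clause of `φ`. -/
def searchCNF {ℓ : ℕ} (φ : Finset (CnfClause ℓ)) :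
    (Fin ℓ → Bool) → CnfClause ℓ → Prop :=
  fun z C => C ∈ φ ∧ ¬ clauseSat z C

/-- The standard polynomial encoding of a clause. -/
def clausePoly {ℓ : ℕ} (C : CnfClause ℓ) : MvPolynomial (Fin ℓ) (ZMod 2) :=
  ∏ lit ∈ C, (if lit.2 then 1 - MvPolynomial.X lit.1 else MvPolynomial.X lit.1)

/-- The Nullstellensatz degree of a CNF contradiction `φ` over `F₂`. -/
def NSdeg {ℓ : ℕ} (φ : Finset (CnfClause ℓ)) : ℕ :=
  sInf {d : ℕ | ∃ (q : CnfClause ℓ → MvPolynomial (Fin ℓ) (ZMod 2))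
      (r : Fin ℓ → MvPolynomial (Fin ℓ) (ZMod 2)),
      ((∑ C ∈ φ, clausePoly C * q C) +
        ∑ i : Fin ℓ, (MvPolynomial.X i ^ 2 - MvPolynomial.X i) * r i) = 1 ∧
      (∀ C ∈ φ, (clausePoly C * q C).totalDegree ≤ d) ∧
      (∀ i : Fin ℓ, ((MvPolynomial.X i ^ 2 - MvPolynomial.X i) * r i).totalDegree ≤ d)}

/-- The equality gadget. -/
def eqGadget {Λ : Type} [DecidableEq Λ] : Λ → Λ → Bool := fun u v => decide (u = v)

/-! ### Semi-monotone composition -/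

/-- `U_m ◇ mKW_g` : Alice gets `X`, Bob gets `Y`; with `a_i = g(X_i)`, `b_i = g(Y_i)`,
valid outputs are entries `(i,j)` with (`a_i > b_i` and `X i j > Y i j`), or
(`a_i < b_i` and `X i j < Y i j`), or (`a_i = b_i` and `X i j ≠ Y i j`); if `a = b`
the players may output the failure symbol `⊥` (here `none`). -/
def semiU {m : ℕ} {ι : Type} (g : (ι → Bool) → Bool) :
    (Fin m → ι → Bool) → (Fin m → ι → Bool) → Option (Fin m × ι) → Prop :=
  fun X Y o =>
    match o with
    | none => ∀ i, g (X i) = g (Y i)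
    | some e =>
        (g (X e.1) = true ∧ g (Y e.1) = false ∧ X e.1 e.2 = true ∧ Y e.1 e.2 = false) ∨
        (g (X e.1) = false ∧ g (Y e.1) = true ∧ X e.1 e.2 = false ∧ Y e.1 e.2 = true) ∨
        (g (X e.1) = g (Y e.1) ∧ X e.1 e.2 ≠ Y e.1 e.2)

/-! ### Razborov rank measure over F₂ -/

/-- The maximal `F₂`-rank of the restriction of `A` to an `S`-monochromatic rectangle. -/
def monoMaxRank {X Y O : Type} [Fintype X] [Fintype Y]
    (S : X → Y → O → Prop) (A : Matrix X Y (ZMod 2)) : ℕ :=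
  sSup {r : ℕ | ∃ (U : Finset X) (V : Finset Y) (o : O),
    (∀ x ∈ U, ∀ y ∈ V, S x y o) ∧
    r = (A.submatrix (Subtype.val : {x // x ∈ U} → X)
          (Subtype.val : {y // y ∈ V} → Y)).rank}

/-- The Razborov rank measure `μ_{F₂}(S, A)`. -/
def muF2 {X Y O : Type} [Fintype X] [Fintype Y]
    (S : X → Y → O → Prop) (A : Matrix X Y (ZMod 2)) : ℝ :=
  (A.rank : ℝ) / (monoMaxRank S A : ℝ)

/-! ### Kronecker powers, pattern matrices -/

/-- The `m`-fold Kronecker power of a square matrix `B`, with index type `Fin m → ι`. -/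
def kronPow {ι R : Type} [CommMonoid R] (m : ℕ) (B : Matrix ι ι R) :
    Matrix (Fin m → ι) (Fin m → ι) R :=
  Matrix.of fun x y => ∏ i, B (x i) (y i)

/-- The pattern matrix `A_{x,y} = p(eq(x₁,y₁),…,eq(x_ℓ,y_ℓ))` of a multilinear
polynomial `p` with coefficients `phat` over `F₂`. -/
def patternMatrix {Λ : Type} [DecidableEq Λ] (ℓ : ℕ)
    (phat : Finset (Fin ℓ) → ZMod 2) : Matrix (Fin ℓ → Λ) (Fin ℓ → Λ) (ZMod 2) :=
  Matrix.of fun x y =>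
    ∑ T : Finset (Fin ℓ), phat T * ∏ i ∈ T, (if x i = y i then (1 : ZMod 2) else 0)

/-! ### s-t-connectivity -/

/-- The `s`-`t`-connectivity function: the input is the adjacency matrix of a directed
graph on `n` vertices, `s = 0`, `t = n-1`; output is whether `t` is reachable from `s`. -/
def stConn (n : ℕ) : ((Fin n × Fin n) → Bool) → Bool :=
  fun E =>
    if ∀ h : 0 < n,
        Relation.ReflTransGen (fun u v : Fin n => E (u, v) = true)
          ⟨0, h⟩ ⟨n - 1, Nat.sub_lt h Nat.one_pos⟩
      then true else false

/-! ### The matrix M of the semi-monotone composition theorem -/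

/-- The matrix `M` used in the semi-monotone composition theorem, built from a matrix
`A ∈ F₂^{𝒳×𝒴}` (with `𝒳 = range xs`, `𝒴 = range ys` identified with `Fin K` via the
left inverses `ix`, `iy`). -/
def semiM {m n K : ℕ} (g : (Fin n → Bool) → Bool) (xs ys : Fin K → (Fin n → Bool))
    (ix iy : (Fin n → Bool) → Fin K) (A : Matrix (Fin K) (Fin K) (ZMod 2)) :
    Matrix (Fin m → Fin n → Bool) (Fin m → Fin n → Bool) (ZMod 2) :=
  Matrix.of fun X Y =>
    if (fun i => g (X i)) = (fun i => g (Y i)) then 0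
    else ∏ i : Fin m,
      (if g (X i) = true ∧ g (Y i) = false then A (ix (X i)) (iy (Y i))
       else if g (X i) = false ∧ g (Y i) = true then A (ix (Y i)) (iy (X i))
       else if X i = Y i then 1 else 0)

end
theorem kronPow_mul_aux {ι R : Type} [Fintype ι] [CommSemiring R] (m : ℕ) (B C : Matrix ι ι R) :
    kronPow m B * kronPow m C = kronPow m (B * C) := by
  ext x y
  simp only [Matrix.mul_apply, kronPow, Matrix.of_apply, ← Finset.prod_mul_distrib]
  rw [Finset.prod_univ_sum]
  simp

/-- If `A² = I` over `F₂` and `B = [[I,A],[A,I]]`, then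
`B^{⊗m} + I` has full rank `(2K)^m`, i.e. it is invertible. -/
theorem kronecker_power_plus_identity_full_rank (K m : ℕ) (hK : 1 ≤ K) (hm : 1 ≤ m)
    (A : Matrix (Fin K) (Fin K) (ZMod 2)) (hA : A * A = 1) :
    (kronPow m (Matrix.fromBlocks 1 A A 1) + 1).rank = (2 * K) ^ m ∧
    IsUnit (kronPow m (Matrix.fromBlocks 1 A A 1) + 1) := by
  set N := kronPow m (Matrix.fromBlocks 1 A A 1) with hN
  have h2 : ∀ x : ZMod 2, x + x = 0 := by decide
  have hB : (Matrix.fromBlocks 1 A A 1 : Matrix (Fin K ⊕ Fin K) (Fin K ⊕ Fin K) (ZMod 2)) *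
      Matrix.fromBlocks 1 A A 1 = 0 := by
    rw [Matrix.fromBlocks_multiply]
    simp only [hA, Matrix.one_mul, Matrix.mul_one]
    ext (i | i) (j | j) <;> simp [h2]
  have hNN : N * N = 0 := by
    rw [hN, kronPow_mul_aux, hB]
    ext x y
    simp only [kronPow, Matrix.of_apply, Matrix.zero_apply]
    exact Finset.prod_eq_zero (Finset.mem_univ (⟨0, hm⟩ : Fin m)) rfl
  have hNa : N + N = 0 := by
    ext x y
    exact h2 _
  have hinv : (N + 1) * (N + 1) = 1 := by
    rw [add_mul, mul_add, hNN, mul_one, one_mul, zero_add, ← add_assoc, hNa, zero_add]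
  have hu : IsUnit (N + 1) := ⟨⟨N + 1, N + 1, hinv, hinv⟩, rfl⟩
  refine ⟨?_, hu⟩
  rw [Matrix.rank_of_isUnit _ hu]
  simp [two_mul]
end

section
/- Let g : {0,1}^n → {0,1} be a non-constant monotone function, let 𝒳 ⊆ g^{-1}(1) and 𝒴 ⊆ g^{-1}(0) be sets of equal size K, each identified with [K] via fixed bijections, and let A ∈ F₂^{K×K} be a symmetric matrix with A² = I_K (viewed as a matrix with rows indexed by 𝒳 and columns by 𝒴). Let 𝒲 be the set of matrices in {0,1}^{m×n} all of whose rows lie in 𝒳 ∪ 𝒴, so |𝒲| = (2K)^m, and let M ∈ F₂^{𝒲×𝒲} be defined by: M_{X,Y} = 0 if a = b, and otherwise M_{X,Y} = ∏_{i=1}^m c_i, where a_i = g(X_i), b_i = g(Y_i), and c_i = A_{X_i,Y_i} if a_i = 1 and b_i = 0; c_i = A_{Y_i,X_i} if a_i = 0 and b_i = 1; and c_i = 1 if a_i = b_i and X_i = Y_i, c_i = 0 if a_i = b_i and X_i ≠ Y_i. Then for every monochromatic rectangle R of the communication problem U_m ◇ mKW_{𝒳×𝒴}, it holds that rank_{F₂}(M|_R)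 ≤ (2K)^m / (2^m · μ_{F₂}(mKW_{𝒳×𝒴}, A)); equivalently, log₂ rank_{F₂}(M|_R) ≤ log₂|𝒲| − m − log₂ μ_{F₂}(mKW_{𝒳×𝒴}, A). -/
open Classical

theorem aux_rank_fac {p q : Type} [Fintype p] [Fintype q] (B : Matrix p q (ZMod 2)) :
    ∃ (C : Matrix p (Fin B.rank) (ZMod 2)) (D : Matrix (Fin B.rank) q (ZMod 2)),
      B = C * D := by
  have hmem : ∀ y, (fun x => B x y) ∈ LinearMap.range B.mulVecLin := by
    intro y
    refine ⟨Pi.single y 1, ?_⟩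
    ext x
    simp [Matrix.mulVecLin_apply]
  let b : Module.Basis (Fin B.rank) (ZMod 2) (LinearMap.range B.mulVecLin) :=
    Module.finBasis (ZMod 2) (LinearMap.range B.mulVecLin)
  refine ⟨Matrix.of fun x t => (b t).1 x, Matrix.of fun t y => b.repr ⟨_, hmem y⟩ t, ?_⟩
  ext x y
  have h := congrArg (fun v => v.1 x) (b.sum_repr ⟨_, hmem y⟩)
  simp only [Submodule.coe_sum, Submodule.coe_smul, Finset.sum_apply, Pi.smul_apply,
    smul_eq_mul] at h
  rw [Matrix.mul_apply, ← h]
  exact Finset.sum_congr rfl fun t _ => mul_comm _ _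

/-- Rank of an entrywise product of `a` with a product of low-rank matrices. -/
theorem aux_rank_prod {p q S : Type} [Fintype p] [Fintype q] [Fintype S] {K : ℕ}
    (a : Matrix p q (ZMod 2))
    (L : S → p → Fin K → ZMod 2) (R : S → Fin K → q → ZMod 2) :
    (Matrix.of fun x y => a x y * ∏ s, ∑ k, L s x k * R s k y).rank ≤
      a.rank * K ^ Fintype.card S := by
  obtain ⟨C, D, h⟩ := aux_rank_fac a
  have key : (Matrix.of fun x y => a x y * ∏ s, ∑ k, L s x k * R s k y) =
      (Matrix.of fun x (w : Fin a.rank × (S → Fin K)) => C x w.1 * ∏ s, L s x (w.2 s)) *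
      (Matrix.of fun (w : Fin a.rank × (S → Fin K)) y => D w.1 y * ∏ s, R s (w.2 s) y) := by
    ext x y
    have hxy : a x y = ∑ t, C x t * D t y := by
      rw [← Matrix.mul_apply, ← h]
    simp only [Matrix.of_apply, Matrix.mul_apply]
    rw [Finset.prod_univ_sum, Fintype.piFinset_univ, hxy, Finset.sum_mul_sum,
      ← Finset.univ_product_univ, Finset.sum_product]
    refine Finset.sum_congr rfl fun t _ => Finset.sum_congr rfl fun f _ => ?_
    rw [Finset.prod_mul_distrib]
    ring
  rw [key]
  refine (Matrix.rank_mul_le_left _ _).trans ((Matrix.rank_le_card_width _).trans ?_)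
  simp

theorem aux_le_mono {X Y O : Type} [Fintype X] [Fintype Y]
    (S : X → Y → O → Prop) (A : Matrix X Y (ZMod 2)) (U : Finset X) (V : Finset Y) (o : O)
    (h : ∀ x ∈ U, ∀ y ∈ V, S x y o) :
    (A.submatrix (Subtype.val : {x // x ∈ U} → X)
          (Subtype.val : {y // y ∈ V} → Y)).rank ≤ monoMaxRank S A := by
  refine le_csSup ⟨Fintype.card Y, ?_⟩ ⟨U, V, o, h, rfl⟩
  rintro r ⟨U, V, o, _, rfl⟩
  refine (Matrix.rank_le_card_width _).trans ?_
  exact Fintype.card_subtype_le _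

/-- Rank of a matrix obtained from `A` by duplicating and zeroing rows and columns. -/
theorem aux_rank_zero {p q X Y : Type} [Fintype p] [Fintype q] [Fintype X] [Fintype Y]
    (A : Matrix X Y (ZMod 2)) (P : p → Prop) (Q : q → Prop) (e : p → X) (f : q → Y)
    (U : Finset X) (V : Finset Y) (hP : ∀ x, P x → e x ∈ U) (hQ : ∀ y, Q y → f y ∈ V)
    (a : Matrix p q (ZMod 2)) (ha : ∀ x y, P x → Q y → a x y = A (e x) (f y))
    (ha' : ∀ x y, ¬ (P x ∧ Q y) → a x y = 0) :
    a.rank ≤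
    (A.submatrix (Subtype.val : {x // x ∈ U} → X)
          (Subtype.val : {y // y ∈ V} → Y)).rank := by
  have key : a =
      (Matrix.of fun (x : p) (k : {x // x ∈ U}) =>
        if P x ∧ e x = k.1 then (1 : ZMod 2) else 0) *
      (A.submatrix (Subtype.val : {x // x ∈ U} → X) (Subtype.val : {y // y ∈ V} → Y) *
      (Matrix.of fun (k : {y // y ∈ V}) (y : q) =>
        if Q y ∧ f y = k.1 then (1 : ZMod 2) else 0)) := by
    ext x y
    simp only [Matrix.of_apply, Matrix.mul_apply, Matrix.submatrix_apply]
    by_cases hx : P x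
    · rw [Finset.sum_eq_single ⟨e x, hP x hx⟩]
      · by_cases hy : Q y
        · rw [Finset.sum_eq_single ⟨f y, hQ y hy⟩]
          · simp [hx, hy, ha x y hx hy]
          · intro k _ hk
            have : f y ≠ k.1 := fun h => hk (Subtype.ext h.symm)
            simp [this]
          · simp
        · simp [hy, ha' x y fun h => hy h.2]
      · intro k _ hk
        have : e x ≠ k.1 := fun h => hk (Subtype.ext h.symm)
        simp [this]
      · simp
    · simp [hx, ha' x y fun h => hx h.1]
  rw [key]
  exact (Matrix.rank_mul_le_right _ _).trans (Matrix.rank_mul_le_left _ _)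

theorem aux_core {m n K : ℕ}
    (g : (Fin n → Bool) → Bool)
    (xs ys : Fin K → (Fin n → Bool))
    (ix iy : (Fin n → Bool) → Fin K)
    (hix : ∀ k, ix (xs k) = k) (hiy : ∀ k, iy (ys k) = k)
    (hgx : ∀ k, g (xs k) = true) (hgy : ∀ k, g (ys k) = false)
    (A : Matrix (Fin K) (Fin K) (ZMod 2)) (hsymm : A.IsSymm) (hAA : A * A = 1)
    (U V : Finset (Fin m → Fin n → Bool))
    (hU : ∀ X ∈ U, ∀ i, X i ∈ Set.range xs ∪ Set.range ys)
    (hV : ∀ Y ∈ V, ∀ i, Y i ∈ Set.range xs ∪ Set.range ys)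
    (i : Fin m) (j : Fin n)
    (hUj : ∀ X ∈ U, X i j = true) (hVj : ∀ Y ∈ V, Y i j = false)
    (hmono : ∀ X ∈ U, ∀ Y ∈ V, semiU g X Y (some (i, j))) :
    ((semiM (m := m) g xs ys ix iy A).submatrix
        (Subtype.val : {X // X ∈ U} → (Fin m → Fin n → Bool))
        (Subtype.val : {Y // Y ∈ V} → (Fin m → Fin n → Bool))).rank ≤
      monoMaxRank (fun k k' (j : Fin n) => xs k j = true ∧ ys k' j = false) A *
        K ^ (m - 1) := by
  have h1 : ∀ x, x ∈ Set.range xs ∪ Set.range ys → g x = true → xs (ix x) = x := by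
    rintro x (⟨k, rfl⟩ | ⟨k, rfl⟩) h
    · rw [hix]
    · simp [hgy] at h
  have h0 : ∀ x, x ∈ Set.range xs ∪ Set.range ys → g x = false → ys (iy x) = x := by
    rintro x (⟨k, rfl⟩ | ⟨k, rfl⟩) h
    · simp [hgx] at h
    · rw [hiy]
  let L : (Fin n → Bool) → Fin K → ZMod 2 := fun x k =>
    if g x = true then (1 : Matrix (Fin K) (Fin K) (ZMod 2)) (ix x) k else A (iy x) k
  let R : Fin K → (Fin n → Bool) → ZMod 2 := fun k y =>
    if g y = true then (1 : Matrix (Fin K) (Fin K) (ZMod 2)) k (ix y) else A k (iy y)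
  have hLR : ∀ x ∈ Set.range xs ∪ Set.range ys, ∀ y ∈ Set.range xs ∪ Set.range ys,
      (if g x = true ∧ g y = false then A (ix x) (iy y)
       else if g x = false ∧ g y = true then A (ix y) (iy x)
       else if x = y then 1 else 0) = ∑ k, L x k * R k y := by
    intro x hx y hy
    cases hgx' : g x <;> cases hgy' : g y <;> simp only [L, R, hgx', hgy', ← Matrix.mul_apply]
    · have e : x = y ↔ iy x = iy y :=
        ⟨fun h => by rw [h], fun h => by rw [← h0 x hx hgx', ← h0 y hy hgy', h]⟩
      have := congrFun (congrFun hAA (iy x)) (iy y)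
      rw [Matrix.mul_apply, Matrix.one_apply] at this
      simp [e, this]
    · have := hsymm.apply (ix y) (iy x)
      simp [Matrix.one_apply, this]
    · simp [Matrix.one_apply]
    · have e : x = y ↔ ix x = ix y :=
        ⟨fun h => by rw [h], fun h => by rw [← h1 x hx hgx', ← h1 y hy hgy', h]⟩
      simp [Matrix.one_apply, e]
  have key : (semiM (m := m) g xs ys ix iy A).submatrix
        (Subtype.val : {X // X ∈ U} → (Fin m → Fin n → Bool))
        (Subtype.val : {Y // Y ∈ V} → (Fin m → Fin n → Bool)) =
      Matrix.of fun X Y =>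
        (Matrix.of fun (X : {X // X ∈ U}) (Y : {Y // Y ∈ V}) =>
          if g (X.1 i) = true ∧ g (Y.1 i) = false then A (ix (X.1 i)) (iy (Y.1 i)) else 0) X Y *
        ∏ s : {s : Fin m // s ≠ i}, ∑ k, L (X.1 s) k * R k (Y.1 s) := by
    ext ⟨X, hX⟩ ⟨Y, hY⟩
    simp only [Matrix.of_apply, Matrix.submatrix_apply, semiM]
    have hm := hmono X hX Y hY
    have hXj := hUj X hX
    have hYj := hVj Y hY
    simp only [semiU, hXj, hYj] at hm
    have hne : X i ≠ Y i := fun h => by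
      have := congrFun h j
      simp [hXj, hYj] at this
    have hprod : ∏ s : {s : Fin m // s ≠ i}, ∑ k, L (X s) k * R k (Y s) =
        ∏ s : {s : Fin m // s ≠ i},
          (if g (X s) = true ∧ g (Y s) = false then A (ix (X s)) (iy (Y s))
           else if g (X s) = false ∧ g (Y s) = true then A (ix (Y s)) (iy (X s))
           else if X s = Y s then 1 else 0) :=
      Finset.prod_congr rfl fun s _ => (hLR _ (hU X hX s) _ (hV Y hY s)).symm
    rw [hprod]
    split_ifs with ha hb hb
    · have := congrFun ha i
      simp [hb.1, hb.2] at this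
    · simp
    · rw [Fintype.prod_eq_mul_prod_subtype_ne _ i, if_pos hb]
    · rw [Fintype.prod_eq_mul_prod_subtype_ne _ i, if_neg hb, if_neg ?_, if_neg hne]
      · rintro ⟨h3, h4⟩
        simp [h3, h4] at hm
  clear_value L R
  obtain ⟨a, hae⟩ : ∃ a : Matrix {X // X ∈ U} {Y // Y ∈ V} (ZMod 2), a =
      Matrix.of fun (X : {X // X ∈ U}) (Y : {Y // Y ∈ V}) =>
          if g (X.1 i) = true ∧ g (Y.1 i) = false then A (ix (X.1 i)) (iy (Y.1 i)) else 0 :=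
    ⟨_, rfl⟩
  rw [← hae] at key
  have hpos : ∀ X Y, g (X.1 i) = true → g (Y.1 i) = false →
      a X Y = A (ix (X.1 i)) (iy (Y.1 i)) := by
    intro X Y hX hY
    rw [hae, Matrix.of_apply, if_pos ⟨hX, hY⟩]
  have hneg : ∀ X Y, ¬ (g (X.1 i) = true ∧ g (Y.1 i) = false) → a X Y = 0 := by
    intro X Y h
    rw [hae, Matrix.of_apply, if_neg h]
  have hU' : ∀ X : {X // X ∈ U}, g (X.1 i) = true →
      ix (X.1 i) ∈ Finset.univ.filter fun k => xs k j = true := by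
    rintro ⟨X, hX⟩ h
    rw [Finset.mem_filter]
    refine ⟨Finset.mem_univ _, ?_⟩
    rw [h1 _ (hU X hX i) h, hUj X hX]
  have hV' : ∀ Y : {Y // Y ∈ V}, g (Y.1 i) = false →
      iy (Y.1 i) ∈ Finset.univ.filter fun k => ys k j = false := by
    rintro ⟨Y, hY⟩ h
    rw [Finset.mem_filter]
    refine ⟨Finset.mem_univ _, ?_⟩
    rw [h0 _ (hV Y hY i) h, hVj Y hY]
  have hmon := aux_le_mono (fun k k' (j : Fin n) => xs k j = true ∧ ys k' j = false) A
    (Finset.univ.filter fun k => xs k j = true) (Finset.univ.filter fun k => ys k j = false) j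
    (fun x hx y hy => And.intro (Finset.mem_filter.1 hx).2 (Finset.mem_filter.1 hy).2)
  have hz := aux_rank_zero A (fun X : {X // X ∈ U} => g (X.1 i) = true)
    (fun Y : {Y // Y ∈ V} => g (Y.1 i) = false) (fun X => ix (X.1 i)) (fun Y => iy (Y.1 i))
    _ _ hU' hV' a hpos hneg
  have hp := aux_rank_prod a (fun (s : {s : Fin m // s ≠ i}) X k => L (X.1 s) k)
    (fun s k Y => R k (Y.1 s))
  have hc : Fintype.card {s : Fin m // s ≠ i} = m - 1 := by
    simp
  rw [hc] at hp
  rw [key]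
  exact hp.trans (Nat.mul_le_mul_right _ (hz.trans hmon))

theorem aux_semiM_symm {m n K : ℕ}
    (g : (Fin n → Bool) → Bool)
    (xs ys : Fin K → (Fin n → Bool))
    (ix iy : (Fin n → Bool) → Fin K) (A : Matrix (Fin K) (Fin K) (ZMod 2))
    (X Y : Fin m → Fin n → Bool) :
    semiM g xs ys ix iy A X Y = semiM g xs ys ix iy A Y X := by
  simp only [semiM, Matrix.of_apply]
  by_cases h : (fun i => g (X i)) = (fun i => g (Y i))
  · rw [if_pos h, if_pos h.symm]
  · rw [if_neg h, if_neg fun h' => h h'.symm]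
    refine Finset.prod_congr rfl fun i _ => ?_
    have e : (if X i = Y i then (1 : ZMod 2) else 0) = if Y i = X i then 1 else 0 := by
      by_cases h : X i = Y i
      · rw [if_pos h, if_pos h.symm]
      · rw [if_neg h, if_neg fun h' => h h'.symm]
    rw [e]
    cases g (X i) <;> cases g (Y i) <;> simp


/-- For every monochromatic rectangle `R = U × V` of the
communication problem `U_m ◇ mKW_{𝒳×𝒴}` (restricted to matrices whose rows lie in
`𝒳 ∪ 𝒴`), the restriction of `M` to `R` has
`rank_{F₂}(M|_R) ≤ (2K)^m / (2^m · μ_{F₂}(mKW_{𝒳×𝒴}, A))`. -/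
theorem semiM_monochromatic_rank_bound (m n K : ℕ) (hm : 1 ≤ m) (hK : 1 ≤ K)
    (g : (Fin n → Bool) → Bool) (hg : Monotone g)
    (hg1 : ∃ x, g x = true) (hg0 : ∃ x, g x = false)
    (xs ys : Fin K → (Fin n → Bool))
    (ix iy : (Fin n → Bool) → Fin K)
    (hix : ∀ k, ix (xs k) = k) (hiy : ∀ k, iy (ys k) = k)
    (hgx : ∀ k, g (xs k) = true) (hgy : ∀ k, g (ys k) = false)
    (A : Matrix (Fin K) (Fin K) (ZMod 2)) (hsymm : A.IsSymm) (hAA : A * A = 1)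
    (U V : Finset (Fin m → Fin n → Bool))
    (hU : ∀ X ∈ U, ∀ i, X i ∈ Set.range xs ∪ Set.range ys)
    (hV : ∀ Y ∈ V, ∀ i, Y i ∈ Set.range xs ∪ Set.range ys)
    (o : Option (Fin m × Fin n))
    (hmono : ∀ X ∈ U, ∀ Y ∈ V, semiU g X Y o) :
    (((semiM (m := m) g xs ys ix iy A).submatrix
        (Subtype.val : {X // X ∈ U} → (Fin m → Fin n → Bool))
        (Subtype.val : {Y // Y ∈ V} → (Fin m → Fin n → Bool))).rank : ℝ) ≤
      ((2 * K : ℝ)) ^ m /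
        ((2 : ℝ) ^ m *
          muF2 (fun k k' (j : Fin n) => xs k j = true ∧ ys k' j = false) A) := by
  have hrank : A.rank = K := by
    have : IsUnit A := ⟨⟨A, A, hAA, hAA⟩, rfl⟩
    rw [Matrix.rank_of_isUnit A this, Fintype.card_fin]
  have hKr : (0 : ℝ) < K := by exact_mod_cast hK
  set μ := monoMaxRank (fun k k' (j : Fin n) => xs k j = true ∧ ys k' j = false) A with hμ
  have hrhs : ((2 * K : ℝ)) ^ m /
        ((2 : ℝ) ^ m *
          muF2 (fun k k' (j : Fin n) => xs k j = true ∧ ys k' j = false) A) =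
      ((μ * K ^ (m - 1) : ℕ) : ℝ) := by
    unfold muF2
    rw [hrank, ← hμ]
    obtain ⟨m', rfl⟩ : ∃ m', m = m' + 1 := ⟨m - 1, by omega⟩
    rcases Nat.eq_zero_or_pos μ with h | h
    · simp [h]
    · have : (0 : ℝ) < μ := by exact_mod_cast h
      push_cast
      rw [mul_pow, pow_succ (K : ℝ)]
      field_simp
  rw [hrhs, Nat.cast_le]
  rcases o with _ | ⟨i, j⟩
  · have : (semiM (m := m) g xs ys ix iy A).submatrix
        (Subtype.val : {X // X ∈ U} → (Fin m → Fin n → Bool))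
        (Subtype.val : {Y // Y ∈ V} → (Fin m → Fin n → Bool)) = 0 := by
      ext ⟨X, hX⟩ ⟨Y, hY⟩
      have h : ∀ i, g (X i) = g (Y i) := hmono X hX Y hY
      simp [semiM, h]
    rw [this, Matrix.rank_zero]
    exact Nat.zero_le _
  · have hdiff : ∀ X ∈ U, ∀ Y ∈ V, X i j = !(Y i j) := by
      intro X hX Y hY
      have h := hmono X hX Y hY
      simp only [semiU] at h
      rcases h with h | h | h
      · simp [h]
      · simp [h]
      · exact Bool.eq_not.2 h.2
    by_cases hUe : U.Nonempty
    · by_cases hVe : V.Nonempty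
      · obtain ⟨X0, hX0⟩ := hUe
        obtain ⟨Y0, hY0⟩ := hVe
        cases hY : Y0 i j
        · refine aux_core g xs ys ix iy hix hiy hgx hgy A hsymm hAA U V hU hV i j ?_ ?_ hmono
          · intro X hX
            simp [hdiff X hX Y0 hY0, hY]
          · intro Y hY'
            have a := hdiff X0 hX0 Y hY'
            have b := hdiff X0 hX0 Y0 hY0
            rw [hY] at b
            simpa [b] using a
        · have ht : (semiM (m := m) g xs ys ix iy A).submatrix
              (Subtype.val : {X // X ∈ U} → (Fin m → Fin n → Bool))
              (Subtype.val : {Y // Y ∈ V} → (Fin m → Fin n → Bool)) =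
              ((semiM (m := m) g xs ys ix iy A).submatrix
              (Subtype.val : {X // X ∈ V} → (Fin m → Fin n → Bool))
              (Subtype.val : {Y // Y ∈ U} → (Fin m → Fin n → Bool))).transpose := by
            ext X Y
            exact aux_semiM_symm g xs ys ix iy A X.1 Y.1
          rw [ht, Matrix.rank_transpose]
          refine aux_core g xs ys ix iy hix hiy hgx hgy A hsymm hAA V U hV hU i j ?_ ?_ ?_
          · intro Y hY'
            have a := hdiff X0 hX0 Y hY'
            have b := hdiff X0 hX0 Y0 hY0
            rw [hY] at b
            simpa [b] using a
          · intro X hX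
            simp [hdiff X hX Y0 hY0, hY]
          · intro Y hY' X hX
            have h := hmono X hX Y hY'
            simp only [semiU] at h ⊢
            rcases h with h | h | h
            · exact Or.inr (Or.inl ⟨h.2.1, h.1, h.2.2.2, h.2.2.1⟩)
            · exact Or.inl ⟨h.2.1, h.1, h.2.2.2, h.2.2.1⟩
            · exact Or.inr (Or.inr ⟨h.1.symm, h.2.symm⟩)
      · rw [Finset.not_nonempty_iff_eq_empty] at hVe
        subst hVe
        refine (Matrix.rank_le_card_width _).trans ?_
        simp
    · rw [Finset.not_nonempty_iff_eq_empty] at hUe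
      subst hUe
      refine (Matrix.rank_le_card_height _).trans ?_
      simp
end

section
/- Let Λ be a finite set of even, positive cardinality, let ℓ ≥ 1, and let p : F₂^ℓ → F₂ be a multilinear polynomial, p(z) = Σ_{T⊆[ℓ]} p̂(T)·∏_{i∈T} z_i with coefficients p̂(T) ∈ F₂, whose top coefficient satisfies p̂([ℓ]) = 1. Define the pattern matrix A ∈ F₂^{Λ^ℓ × Λ^ℓ} by A_{x,y} = p(eq(x_1,y_1),…,eq(x_ℓ,y_ℓ)), where eq(u,v) = 1 if u = v and 0 otherwise. Then A is symmetric and A² = I, the identity matrix of order |Λ|^ℓ. -/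
open Classical

/-- Inner product of row `x` of `M_T` with column `y` of `M_S`. -/
def pmC {Λ : Type} [Fintype Λ] [DecidableEq Λ] {ℓ : ℕ} (x y : Fin ℓ → Λ)
    (T S : Finset (Fin ℓ)) : ZMod 2 :=
  ∑ z : Fin ℓ → Λ, (∏ i ∈ T, (if x i = z i then (1 : ZMod 2) else 0)) *
    ∏ i ∈ S, (if z i = y i then (1 : ZMod 2) else 0)

theorem pmC_eq {Λ : Type} [Fintype Λ] [DecidableEq Λ]
    (heven : Even (Fintype.card Λ)) {ℓ : ℕ} (x y : Fin ℓ → Λ) (T S : Finset (Fin ℓ)) :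
    pmC x y T S = ∏ i, (if i ∈ T then (if i ∈ S then (if x i = y i then (1 : ZMod 2) else 0)
      else 1) else (if i ∈ S then 1 else 0)) := by
  have h0 : (Fintype.card Λ : ZMod 2) = 0 := by
    rw [ZMod.natCast_eq_zero_iff]; exact heven.two_dvd
  have h1 : pmC x y T S = ∑ z : Fin ℓ → Λ, ∏ i,
      ((if i ∈ T then (if x i = z i then (1 : ZMod 2) else 0) else 1) *
        (if i ∈ S then (if z i = y i then (1 : ZMod 2) else 0) else 1)) := by
    unfold pmC
    refine Finset.sum_congr rfl fun z _ => ?_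
    rw [Finset.prod_mul_distrib, Finset.prod_ite_mem, Finset.prod_ite_mem]
    simp
  rw [h1, ← Fintype.prod_sum (fun i (w : Λ) =>
      ((if i ∈ T then (if x i = w then (1 : ZMod 2) else 0) else 1) *
        (if i ∈ S then (if w = y i then (1 : ZMod 2) else 0) else 1)))]
  refine Finset.prod_congr rfl fun i _ => ?_
  by_cases hT : i ∈ T <;> by_cases hS : i ∈ S <;> simp [hT, hS, h0]

theorem pmC_comm {Λ : Type} [Fintype Λ] [DecidableEq Λ]
    (heven : Even (Fintype.card Λ)) {ℓ : ℕ} (x y : Fin ℓ → Λ) (T S : Finset (Fin ℓ)) :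
    pmC x y T S = pmC x y S T := by
  rw [pmC_eq heven, pmC_eq heven]
  refine Finset.prod_congr rfl fun i _ => ?_
  by_cases hT : i ∈ T <;> by_cases hS : i ∈ S <;> simp [hT, hS]

theorem pmC_self {Λ : Type} [Fintype Λ] [DecidableEq Λ]
    (heven : Even (Fintype.card Λ)) {ℓ : ℕ} (x y : Fin ℓ → Λ) (T : Finset (Fin ℓ))
    (hT : T ≠ Finset.univ) : pmC x y T T = 0 := by
  rw [pmC_eq heven]
  obtain ⟨i, hi⟩ : ∃ i, i ∉ T := by
    by_contra! h
    exact hT (Finset.eq_univ_iff_forall.2 h)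
  exact Finset.prod_eq_zero (Finset.mem_univ i) (by simp [hi])

theorem pmC_univ {Λ : Type} [Fintype Λ] [DecidableEq Λ]
    (heven : Even (Fintype.card Λ)) {ℓ : ℕ} (x y : Fin ℓ → Λ) :
    pmC x y Finset.univ Finset.univ = if x = y then 1 else 0 := by
  rw [pmC_eq heven]
  simp [Finset.prod_ite_zero, funext_iff]

/-- Let `Λ` be a finite set of even positive cardinality and let
`p` be a multilinear polynomial over `F₂` in `ℓ` variables with top coefficient
`p̂([ℓ]) = 1`.  Then the pattern matrix `A_{x,y} = p(eq(x₁,y₁),…,eq(x_ℓ,y_ℓ))` is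
symmetric and satisfies `A² = I`. -/
theorem pattern_matrix_symmetric_involution {Λ : Type} [Fintype Λ] [DecidableEq Λ]
    (heven : Even (Fintype.card Λ)) (hpos : 0 < Fintype.card Λ)
    (ℓ : ℕ) (hℓ : 1 ≤ ℓ)
    (phat : Finset (Fin ℓ) → ZMod 2) (htop : phat Finset.univ = 1) :
    (patternMatrix (Λ := Λ) ℓ phat).IsSymm ∧
    patternMatrix (Λ := Λ) ℓ phat * patternMatrix (Λ := Λ) ℓ phat = 1 := by
  constructor
  · ext x y
    simp only [Matrix.transpose_apply, patternMatrix, Matrix.of_apply]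
    simp only [eq_comm]
  · ext x y
    have h1 : (patternMatrix (Λ := Λ) ℓ phat * patternMatrix (Λ := Λ) ℓ phat) x y =
        ∑ q : Finset (Fin ℓ) × Finset (Fin ℓ), phat q.1 * phat q.2 * pmC x y q.1 q.2 := by
      rw [Matrix.mul_apply, Fintype.sum_prod_type]
      simp only [patternMatrix, Matrix.of_apply, Finset.sum_mul_sum]
      rw [Finset.sum_comm]
      refine Finset.sum_congr rfl fun T _ => ?_
      rw [Finset.sum_comm]
      refine Finset.sum_congr rfl fun S _ => ?_
      rw [pmC, Finset.mul_sum]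
      refine Finset.sum_congr rfl fun z _ => ?_
      ring
    rw [h1, ← Finset.add_sum_erase _ _ (Finset.mem_univ (Finset.univ, Finset.univ))]
    have h2 : ∑ q ∈ Finset.univ.erase ((Finset.univ : Finset (Fin ℓ)),
        (Finset.univ : Finset (Fin ℓ))), phat q.1 * phat q.2 * pmC x y q.1 q.2 = 0 := by
      refine Finset.sum_involution (fun q _ => q.swap) ?_ ?_ ?_ ?_
      · rintro ⟨T, S⟩ _
        simp only [Prod.swap]
        rw [pmC_comm heven x y S T, mul_comm (phat S)]
        exact CharTwo.add_self_eq_zero _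
      · rintro ⟨T, S⟩ hm hne heq
        simp only [Prod.swap, Prod.mk.injEq] at heq
        obtain ⟨rfl, -⟩ := heq
        apply hne
        have : S ≠ Finset.univ := by
          rintro rfl
          simp at hm
        simp [pmC_self heven x y S this]
      · rintro ⟨T, S⟩ hm
        simp only [Finset.mem_erase, Finset.mem_univ, and_true, ne_eq, Prod.swap,
          Prod.mk.injEq] at hm ⊢
        tauto
      · rintro ⟨T, S⟩ _
        rfl
    rw [h2, pmC_univ heven, htop, Matrix.one_apply]
    simp
end
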